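/- arXiv:2107.01060 — 2 statements merged into one kernel-verified Lean document; each statement's English description precedes it below -/
import Mathlib

section
/- Let ρ₁, ρ₂ ∈ M(ℂ^n) be density matrices, let r ≥ 1 and δ ≥ 0, and assume that ρ₁ or ρ₂ is δ-almost rank r. Then ‖ρ₁ − ρ₂‖₂² ≤ 2r (‖ρ₁ − ρ₂‖_∞ + δ)². -/
noncomputable section
open Matrix Kronecker BigOperators
open scoped ComplexOrder

/-- The Frobenius (Hilbert–Schmidt) norm `‖A‖₂ = √Tr(AᴴA)` of a complex matrix. -/
def frobNorm {n : Type*} [Fintype n] (A : Matrix n n ℂ) : ℝ :=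
  Real.sqrt (Matrix.trace (Aᴴ * A)).re

/-- The operator norm `‖A‖_∞` (largest singular value) of a complex matrix. -/
def opNorm {n : Type*} [Fintype n] [DecidableEq n] (A : Matrix n n ℂ) : ℝ :=
  ‖Matrix.toEuclideanCLM (𝕜 := ℂ) A‖

/-- The positive semidefinite square root of a positive semidefinite matrix. -/
def Matrix.PosSemidef.sqrt {n 𝕜 : Type*} [Fintype n] [RCLike 𝕜] [DecidableEq n]
    {A : Matrix n n 𝕜} (hA : A.PosSemidef) : Matrix n n 𝕜 :=
  hA.1.eigenvectorUnitary.1 * Matrix.diagonal ((↑) ∘ Real.sqrt ∘ hA.1.eigenvalues) *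
    (star hA.1.eigenvectorUnitary : Matrix n n 𝕜)

/-- The trace norm `‖A‖₁ = Tr √(AᴴA)` of a complex matrix. -/
def traceNorm {n : Type*} [Fintype n] [DecidableEq n] (A : Matrix n n ℂ) : ℝ :=
  ((Matrix.posSemidef_conjTranspose_mul_self A).sqrt).trace.re

/-- A density matrix: positive semidefinite with trace one. -/
def IsDensity {n : Type*} [Fintype n] (ρ : Matrix n n ℂ) : Prop :=
  ρ.PosSemidef ∧ ρ.trace = 1

/-- A density matrix `ρ` is `δ`-almost rank `r` if there is a density matrix of rank at most `r`
within operator-norm distance `δ` of it. -/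
def AlmostRank {n : Type*} [Fintype n] [DecidableEq n] (r : ℕ) (δ : ℝ) (ρ : Matrix n n ℂ) : Prop :=
  ∃ σ : Matrix n n ℂ, IsDensity σ ∧ σ.rank ≤ r ∧ opNorm (ρ - σ) ≤ δ

/-- The rank-one (outer-product) matrix `|v⟩⟨v|`. -/
def outer {n : Type*} (v : EuclideanSpace ℂ n) : Matrix n n ℂ :=
  Matrix.of fun i j => v i * (starRingEnd ℂ) (v j)

/-- Partial trace over the first tensor factor. -/
def ptrace1 {d : ℕ} (X : Matrix (Fin d × Fin d) (Fin d × Fin d) ℂ) : Matrix (Fin d) (Fin d) ℂ :=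
  Matrix.of fun j j' => ∑ i, X (i, j) (i, j')

/-- Partial trace over the second tensor factor. -/
def ptrace2 {d : ℕ} (X : Matrix (Fin d × Fin d) (Fin d × Fin d) ℂ) : Matrix (Fin d) (Fin d) ℂ :=
  Matrix.of fun i i' => ∑ j, X (i, j) (i', j)

/-- A family of `m` rank-one projectors, each given by a unit vector. -/
def IsRankOneProjFamily {d m : ℕ} (P : Fin m → Matrix (Fin d) (Fin d) ℂ) : Prop :=
  ∀ l, ∃ v : EuclideanSpace ℂ (Fin d), ‖v‖ = 1 ∧ P l = outer v

/-- Near-isotropy: `∑ l, Tr(P l · A) • P l = A + Tr(A) • 𝟙` for every `A`. -/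
def NearIsotropic {d m : ℕ} (P : Fin m → Matrix (Fin d) (Fin d) ℂ) : Prop :=
  ∀ A : Matrix (Fin d) (Fin d) ℂ,
    ∑ l, Matrix.trace (P l * A) • P l = A + Matrix.trace A • (1 : Matrix (Fin d) (Fin d) ℂ)

/-! Put `Δ = ρ₁ - ρ₂` and write `P_K` for the orthogonal projection onto `K`. Since `tr Δ = 0`,
`‖Δ‖₂² ≤ ‖Δ‖ (tr Δ⁺ + tr Δ⁻) = 2 ‖Δ‖ tr Δ⁺`, so it suffices that `tr Δ⁺ ≤ r (‖Δ‖ + δ)`. Here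
`tr Δ⁺ = tr (P_K Δ)` with `K` the range of `Δ⁺`. Let `L` be the range of the rank-`r` approximation
`σ` of `ρ₁`. The part `K ⊓ Lᗮ` of `K` has codimension at most `r`, so discarding the rest costs at
most `r ‖Δ‖`; on it `Δ ≤ ρ₁`, and `tr (P_{Lᗮ} ρ₁) = tr (P_L (σ - ρ₁)) ≤ r δ`. -/

section Projection

open Module

variable {𝕜 E : Type*} [RCLike 𝕜] [NormedAddCommGroup E] [InnerProductSpace 𝕜 E]

lemma starProjection_range_mul (T : E →L[𝕜] E) [T.range.HasOrthogonalProjection] :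
    T.range.starProjection * T = T := by
  ext x
  exact Submodule.starProjection_eq_self_iff.2 ⟨x, rfl⟩

lemma starProjection_range_mul_eq_zero [CompleteSpace E] {S T : E →L[𝕜] E}
    [S.range.HasOrthogonalProjection] (h : star S * T = 0) : S.range.starProjection * T = 0 := by
  ext x
  have hx : T x ∈ S.rangeᗮ := by
    rw [ContinuousLinearMap.orthogonal_range]
    exact congr($h x)
  exact (Submodule.starProjection_apply_eq_zero_iff _).2 hx

lemma finrank_le_finrank_inf_orthogonal_add [FiniteDimensional 𝕜 E] (K L : Submodule 𝕜 E) :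
    finrank 𝕜 K ≤ finrank 𝕜 (K ⊓ Lᗮ : Submodule 𝕜 E) + finrank 𝕜 L := by
  have := Submodule.finrank_sup_add_finrank_inf_eq K Lᗮ
  have := L.finrank_add_finrank_orthogonal
  have := (K ⊔ Lᗮ).finrank_le
  omega

end Projection

section Operator

open Module LinearMap

variable {E : Type*} [NormedAddCommGroup E] [InnerProductSpace ℂ E]

/-- The real part of the trace, as a real-linear functional on operators. Real parts are taken
because the argument compares traces, some of them of non-self-adjoint products, as reals. In
infinite dimension this is `0`, as `LinearMap.trace` is. -/
def reTrace : (E →L[ℂ] E) →ₗ[ℝ] ℝ :=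
  Complex.reLm ∘ₗ ((trace ℂ E).restrictScalars ℝ) ∘ₗ
    (ContinuousLinearMap.coeLM ℂ).restrictScalars ℝ

lemma reTrace_apply (T : E →L[ℂ] E) : reTrace T = (trace ℂ E T).re := rfl

lemma reTrace_mul_comm (S T : E →L[ℂ] E) : reTrace (S * T) = reTrace (T * S) :=
  congrArg Complex.re (trace_mul_comm ℂ (S : E →ₗ[ℂ] E) T)

lemma reTrace_nonneg {T : E →L[ℂ] E} (hT : 0 ≤ T) : 0 ≤ reTrace T :=
  have hpos := (ContinuousLinearMap.nonneg_iff_isPositive T).1 hT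
  (Complex.nonneg_iff.1 hpos.toLinearMap.trace_nonneg).1

lemma reTrace_starProjection [FiniteDimensional ℂ E] (K : Submodule ℂ E) :
    reTrace K.starProjection = finrank ℂ K := by
  have hproj : IsProj K (K.starProjection : E →ₗ[ℂ] E) :=
    ⟨K.starProjection_apply_mem, fun _ ↦ Submodule.starProjection_eq_self_iff.2⟩
  rw [reTrace_apply, hproj.trace, Complex.natCast_re]

variable [CompleteSpace E]

lemma reTrace_mul_nonneg {S T : E →L[ℂ] E} (hS : 0 ≤ S) (hT : 0 ≤ T) : 0 ≤ reTrace (S * T) := by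
  obtain ⟨R, rfl⟩ := CStarAlgebra.nonneg_iff_eq_star_mul_self.1 hS
  rw [mul_assoc, reTrace_mul_comm]
  exact reTrace_nonneg (star_right_conjugate_nonneg hT R)

lemma reTrace_mul_le_reTrace_mul_left {R S T : E →L[ℂ] E} (hR : 0 ≤ R) (hST : S ≤ T) :
    reTrace (R * S) ≤ reTrace (R * T) := by
  simpa [mul_sub] using reTrace_mul_nonneg hR (sub_nonneg.2 hST)

lemma reTrace_mul_le_reTrace_mul_right {R S T : E →L[ℂ] E} (hR : 0 ≤ R) (hST : S ≤ T) :
    reTrace (S * R) ≤ reTrace (T * R) := by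
  simpa only [reTrace_mul_comm _ R] using reTrace_mul_le_reTrace_mul_left hR hST

variable [FiniteDimensional ℂ E]

lemma reTrace_star (T : E →L[ℂ] E) : reTrace (star T) = reTrace T := by
  let b := stdOrthonormalBasis ℂ E
  simp only [reTrace_apply, trace_eq_sum_inner _ b, Complex.re_sum]
  refine Finset.sum_congr rfl fun i _ ↦ ?_
  calc (inner ℂ (b i) (star T (b i))).re = (inner ℂ (T (b i)) (b i)).re :=
        congrArg Complex.re (T.adjoint_inner_right (b i) (b i))
    _ = (inner ℂ (b i) (T (b i))).re := inner_re_symm (𝕜 := ℂ) (T (b i)) (b i)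

lemma reTrace_mul_realPart {S : E →L[ℂ] E} (hS : IsSelfAdjoint S) (T : E →L[ℂ] E) :
    reTrace (S * (realPart T : E →L[ℂ] E)) = reTrace (S * T) := by
  have hstar : reTrace (S * star T) = reTrace (S * T) := by
    rw [← reTrace_star (S * T), star_mul, hS.star_eq, reTrace_mul_comm]
  rw [realPart_apply_coe, mul_smul_comm, mul_add, map_smul, map_add, hstar, smul_eq_mul]
  ring

lemma reTrace_mul_le_norm_mul_reTrace {S : E →L[ℂ] E} (hS : 0 ≤ S) (T : E →L[ℂ] E) :
    reTrace (S * T) ≤ ‖T‖ * reTrace S :=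
  calc reTrace (S * T) = reTrace (S * (realPart T : E →L[ℂ] E)) :=
        (reTrace_mul_realPart (.of_nonneg hS) T).symm
    _ ≤ reTrace (S * algebraMap ℝ _ ‖realPart T‖) :=
        reTrace_mul_le_reTrace_mul_left hS (realPart T).2.le_algebraMap_norm_self
    _ = ‖realPart T‖ * reTrace S := by
        rw [Algebra.algebraMap_eq_smul_one, mul_smul_comm, mul_one, map_smul, smul_eq_mul]
    _ ≤ ‖T‖ * reTrace S := by
        gcongr
        exacts [reTrace_nonneg hS, realPart.norm_le T]

lemma starProjection_range_posPart_mul {T : E →L[ℂ] E} (hT : IsSelfAdjoint T) :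
    T⁺.range.starProjection * T = T⁺ := by
  have hneg : T⁺.range.starProjection * T⁻ = 0 := by
    apply starProjection_range_mul_eq_zero
    rw [(IsSelfAdjoint.of_nonneg (CFC.posPart_nonneg T)).star_eq, CFC.posPart_mul_negPart]
  calc T⁺.range.starProjection * T = T⁺.range.starProjection * (T⁺ - T⁻) := by
        rw [CFC.posPart_sub_negPart T]
    _ = T⁺ := by rw [mul_sub, hneg, sub_zero, starProjection_range_mul]

lemma reTrace_starProjection_orthogonal_range_mul_le {A S : E →L[ℂ] E}
    (h : reTrace A = reTrace S) :
    reTrace (S.rangeᗮ.starProjection * A) ≤ ‖A - S‖ * finrank ℂ S.range :=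
  calc reTrace (S.rangeᗮ.starProjection * A)
      = reTrace (S.range.starProjection * (S - A)) := by
        rw [Submodule.starProjection_orthogonal', sub_mul, one_mul, mul_sub,
          starProjection_range_mul, map_sub, map_sub, h]
    _ ≤ ‖S - A‖ * reTrace S.range.starProjection :=
        reTrace_mul_le_norm_mul_reTrace isStarProjection_starProjection.nonneg _
    _ = ‖A - S‖ * finrank ℂ S.range := by rw [norm_sub_rev, reTrace_starProjection]

lemma reTrace_starProjection_mul_le_of_le {A T : E →L[ℂ] E} (hA : 0 ≤ A) (hTA : T ≤ A)
    (K L : Submodule ℂ E) :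
    reTrace (K.starProjection * T) ≤
      reTrace (Lᗮ.starProjection * A) + ‖T‖ * finrank ℂ L := by
  set W := K ⊓ Lᗮ
  have hWK : W.starProjection ≤ K.starProjection :=
    Submodule.starProjection_le_starProjection_iff.2 inf_le_left
  have hWL : W.starProjection ≤ Lᗮ.starProjection :=
    Submodule.starProjection_le_starProjection_iff.2 inf_le_right
  have hcodim : (finrank ℂ K : ℝ) - finrank ℂ W ≤ finrank ℂ L := by
    rw [sub_le_iff_le_add']
    exact_mod_cast finrank_le_finrank_inf_orthogonal_add K L
  calc reTrace (K.starProjection * T)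
      = reTrace (W.starProjection * T) + reTrace ((K.starProjection - W.starProjection) * T) := by
        rw [← map_add, ← add_mul, add_sub_cancel]
    _ ≤ reTrace (W.starProjection * A) + ‖T‖ * reTrace (K.starProjection - W.starProjection) :=
        add_le_add
          (reTrace_mul_le_reTrace_mul_left isStarProjection_starProjection.nonneg hTA)
          (reTrace_mul_le_norm_mul_reTrace (sub_nonneg.2 hWK) T)
    _ ≤ reTrace (Lᗮ.starProjection * A) + ‖T‖ * finrank ℂ L := by
        rw [map_sub, reTrace_starProjection, reTrace_starProjection]
        gcongr
        exact reTrace_mul_le_reTrace_mul_right hA hWL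

lemma reTrace_posPart_le {A S T : E →L[ℂ] E} (hT : IsSelfAdjoint T) (hA : 0 ≤ A) (hTA : T ≤ A)
    (h : reTrace A = reTrace S) :
    reTrace T⁺ ≤ finrank ℂ S.range * (‖T‖ + ‖A - S‖) := by
  rw [← starProjection_range_posPart_mul hT]
  linarith [reTrace_starProjection_mul_le_of_le hA hTA T⁺.range S.range,
    reTrace_starProjection_orthogonal_range_mul_le h]

lemma reTrace_mul_self_le {T : E →L[ℂ] E} (hT : IsSelfAdjoint T) :
    reTrace (T * T) ≤ ‖T‖ * (reTrace T⁺ + reTrace T⁻) :=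
  calc reTrace (T * T) = reTrace (T⁺ * T) + reTrace (T⁻ * -T) := by
        rw [← map_add, mul_neg, ← sub_eq_add_neg, ← sub_mul, CFC.posPart_sub_negPart T]
    _ ≤ ‖T‖ * reTrace T⁺ + ‖-T‖ * reTrace T⁻ :=
        add_le_add (reTrace_mul_le_norm_mul_reTrace (CFC.posPart_nonneg T) T)
          (reTrace_mul_le_norm_mul_reTrace (CFC.negPart_nonneg T) (-T))
    _ = ‖T‖ * (reTrace T⁺ + reTrace T⁻) := by rw [norm_neg, mul_add]

lemma reTrace_mul_self_le_of_reTrace_eq_zero {A S T : E →L[ℂ] E} (hT : IsSelfAdjoint T)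
    (hT₀ : reTrace T = 0) (hA : 0 ≤ A) (hTA : T ≤ A) (hAS : reTrace A = reTrace S) :
    reTrace (T * T) ≤ 2 * finrank ℂ S.range * ‖T‖ * (‖T‖ + ‖A - S‖) := by
  have hneg : reTrace T⁻ = reTrace T⁺ := by
    rw [← CFC.posPart_sub_negPart T, map_sub, sub_eq_zero] at hT₀
    exact hT₀.symm
  calc reTrace (T * T)
      ≤ ‖T‖ * (2 * reTrace T⁺) := by
        simpa only [hneg, two_mul] using reTrace_mul_self_le hT
    _ ≤ ‖T‖ * (2 * (finrank ℂ S.range * (‖T‖ + ‖A - S‖))) := by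
        gcongr
        exact reTrace_posPart_le hT hA hTA hAS
    _ = 2 * finrank ℂ S.range * ‖T‖ * (‖T‖ + ‖A - S‖) := by ring

end Operator

section Matrix

variable {n : Type*} [Fintype n]

lemma frobNorm_sq (A : Matrix n n ℂ) : frobNorm A ^ 2 = (Aᴴ * A).trace.re :=
  Real.sq_sqrt (Complex.nonneg_iff.1 (posSemidef_conjTranspose_mul_self A).trace_nonneg).1

lemma frobNorm_sub_comm (A B : Matrix n n ℂ) : frobNorm (A - B) = frobNorm (B - A) := by
  rw [frobNorm, frobNorm, ← neg_sub B A, conjTranspose_neg, neg_mul_neg]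

variable [DecidableEq n]

lemma opNorm_sub_comm (A B : Matrix n n ℂ) : opNorm (A - B) = opNorm (B - A) := by
  rw [opNorm, opNorm, map_sub, map_sub, norm_sub_rev]

lemma reTrace_toEuclideanCLM (A : Matrix n n ℂ) :
    reTrace (toEuclideanCLM (𝕜 := ℂ) A) = A.trace.re := by
  rw [reTrace_apply, coe_toEuclideanCLM_eq_toEuclideanLin, toEuclideanLin_eq_toLin_orthonormal,
    trace_toLin_eq]

lemma finrank_range_toEuclideanCLM (A : Matrix n n ℂ) :
    Module.finrank ℂ (toEuclideanCLM (𝕜 := ℂ) A).range = A.rank :=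
  (A.rank_eq_finrank_range_toLin _ _).symm

lemma toEuclideanCLM_nonneg {A : Matrix n n ℂ} (hA : A.PosSemidef) :
    0 ≤ toEuclideanCLM (𝕜 := ℂ) A := by
  rw [ContinuousLinearMap.nonneg_iff_isPositive, ← ContinuousLinearMap.isPositive_toLinearMap_iff]
  exact isPositive_toEuclideanLin_iff.2 hA

lemma frobNorm_sub_sq_le {ρ₁ ρ₂ σ : Matrix n n ℂ} (h₁ : ρ₁.PosSemidef) (h₂ : ρ₂.PosSemidef)
    (h₁₂ : ρ₁.trace = ρ₂.trace) (hσ : ρ₁.trace = σ.trace) :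
    frobNorm (ρ₁ - ρ₂) ^ 2 ≤
      2 * σ.rank * opNorm (ρ₁ - ρ₂) * (opNorm (ρ₁ - ρ₂) + opNorm (ρ₁ - σ)) := by
  have hsub : (ρ₁ - ρ₂).IsHermitian := h₁.1.sub h₂.1
  have hbound := reTrace_mul_self_le_of_reTrace_eq_zero
    (T := toEuclideanCLM (𝕜 := ℂ) (ρ₁ - ρ₂)) (S := toEuclideanCLM (𝕜 := ℂ) σ)
    (hsub.isSelfAdjoint.map _)
    (by rw [reTrace_toEuclideanCLM, trace_sub, h₁₂, sub_self, Complex.zero_re])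
    (toEuclideanCLM_nonneg h₁)
    (by rw [map_sub]; exact sub_le_self _ (toEuclideanCLM_nonneg h₂))
    (by rw [reTrace_toEuclideanCLM, reTrace_toEuclideanCLM, hσ])
  rw [← map_mul, ← map_sub _ ρ₁ σ, reTrace_toEuclideanCLM, finrank_range_toEuclideanCLM] at hbound
  rw [frobNorm_sq, hsub.eq]
  exact hbound

theorem frobNorm_sq_le_of_almostRank_general {ρ₁ ρ₂ σ : Matrix n n ℂ} {r : ℕ} {δ : ℝ} {t : ℂ}
    (h₁ : ρ₁.PosSemidef) (h₂ : ρ₂.PosSemidef) (ht₁ : ρ₁.trace = t) (ht₂ : ρ₂.trace = t)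
    (htσ : σ.trace = t) (hr : σ.rank ≤ r)
    (hδ : opNorm (ρ₁ - σ) ≤ δ ∨ opNorm (ρ₂ - σ) ≤ δ) :
    frobNorm (ρ₁ - ρ₂) ^ 2 ≤ 2 * r * (opNorm (ρ₁ - ρ₂) + δ) ^ 2 := by
  wlog hδ₁ : opNorm (ρ₁ - σ) ≤ δ generalizing ρ₁ ρ₂
  · rw [frobNorm_sub_comm, opNorm_sub_comm]
    exact this h₂ h₁ ht₂ ht₁ hδ.symm (hδ.resolve_left hδ₁)
  have hnonneg (A : Matrix n n ℂ) : 0 ≤ opNorm A := norm_nonneg _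
  have hδ₀ : 0 ≤ δ := (hnonneg _).trans hδ₁
  calc frobNorm (ρ₁ - ρ₂) ^ 2
      ≤ 2 * σ.rank * opNorm (ρ₁ - ρ₂) * (opNorm (ρ₁ - ρ₂) + opNorm (ρ₁ - σ)) :=
        frobNorm_sub_sq_le h₁ h₂ (ht₁.trans ht₂.symm) (ht₁.trans htσ.symm)
    _ ≤ 2 * r * (opNorm (ρ₁ - ρ₂) + δ) * (opNorm (ρ₁ - ρ₂) + δ) := by
        have := hnonneg (ρ₁ - ρ₂)
        have := hnonneg (ρ₁ - σ)
        gcongr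
        exact le_add_of_nonneg_right hδ₀
    _ = 2 * r * (opNorm (ρ₁ - ρ₂) + δ) ^ 2 := by ring

end Matrix

/-- Lemma 4: if one of two density matrices is `δ`-almost rank `r`, then
`‖ρ₁ − ρ₂‖₂² ≤ 2r(‖ρ₁ − ρ₂‖_∞ + δ)²`. -/
theorem frobNorm_sq_le_of_almostRank (n : ℕ) (ρ₁ ρ₂ : Matrix (Fin n) (Fin n) ℂ)
    (h₁ : IsDensity ρ₁) (h₂ : IsDensity ρ₂)
    (r : ℕ) (hr : 1 ≤ r) (δ : ℝ) (hδ : 0 ≤ δ)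
    (h : AlmostRank r δ ρ₁ ∨ AlmostRank r δ ρ₂) :
    frobNorm (ρ₁ - ρ₂) ^ 2 ≤ 2 * r * (opNorm (ρ₁ - ρ₂) + δ) ^ 2 := by
  rcases h with ⟨σ, hσ, hrank, hdist⟩ | ⟨σ, hσ, hrank, hdist⟩
  · exact frobNorm_sq_le_of_almostRank_general h₁.1 h₂.1 h₁.2 h₂.2 hσ.2 hrank (.inl hdist)
  · exact frobNorm_sq_le_of_almostRank_general h₁.1 h₂.1 h₁.2 h₂.2 hσ.2 hrank (.inr hdist)
end
end

section
/- Let Φ, B, S ∈ M(ℂ^n) be density matrices and τ ≥ 0, δ ≥ 0, r ≥ 1. Assume ‖B − Φ‖_∞ ≤ 2τ and ‖S − Φ‖₂ ≤ ‖B − Φ‖₂, and assume that B is δ-almost rank r. Then ‖S − Φ‖₁ ≤ r ( (4√2 + 2)δ + (4 + 8√2) · τ ). -/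
/-!
A Hermitian matrix of trace zero has trace norm twice the sum of the absolute values of its negative
eigenvalues. If `ρ ≥ 0` and `ρ - σ` has trace zero, then `ρ - σ` has at most `k = rank σ` negative
eigenvalues, so `‖ρ - σ‖₁` is at most `2k ‖ρ - σ‖_∞` and, by Cauchy–Schwarz, at most
`2√k ‖ρ - σ‖₂`, even though `ρ - σ` may have full rank. Take for `σ` the low-rank approximation of
`B` and put `ε = ‖B - σ‖_∞ + ‖B - Φ‖_∞`. Going from `S` to `Φ` through `σ` reduces the claim to a
bound on `‖S - Φ‖₂ ≤ ‖B - Φ‖₂`, and `‖B - Φ‖₂² ≤ ‖B - Φ‖₁ ‖B - Φ‖_∞ ≤ 2k ε²`. The passage through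
`σ` costs `(2√2 + 2) k ε` and the Frobenius term contributes another `2√2 k ε`.
-/

noncomputable section
open Matrix Kronecker BigOperators
open scoped ComplexOrder

section Frobenius

variable {n : Type*} [Fintype n]

lemma frobNorm_nonneg (A : Matrix n n ℂ) : 0 ≤ frobNorm A := Real.sqrt_nonneg _

open scoped Matrix.Norms.Frobenius in
lemma frobNorm_eq_frobenius_norm (A : Matrix n n ℂ) : frobNorm A = ‖A‖ := by
  have trace_eq : (Aᴴ * A).trace.re = ∑ i, ∑ j, ‖A i j‖ ^ 2 := by
    rw [Finset.sum_comm]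
    simp [Matrix.trace, Matrix.mul_apply, ← Complex.normSq_eq_norm_sq, Complex.normSq_apply]
  simp [frobNorm, trace_eq, Matrix.frobenius_norm_def, Real.sqrt_eq_rpow]

open scoped Matrix.Norms.Frobenius in
lemma frobNorm_add_le (A C : Matrix n n ℂ) : frobNorm (A + C) ≤ frobNorm A + frobNorm C := by
  simpa only [frobNorm_eq_frobenius_norm] using norm_add_le A C

end Frobenius

section OperatorNorm

variable {n : Type*} [Fintype n] [DecidableEq n]

lemma opNorm_nonneg (A : Matrix n n ℂ) : 0 ≤ opNorm A := norm_nonneg _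

lemma opNorm_sub_le (A C : Matrix n n ℂ) : opNorm (A - C) ≤ opNorm A + opNorm C := by
  simpa only [opNorm, map_sub] using norm_sub_le _ _

lemma norm_toEuclideanLin_apply_le (A : Matrix n n ℂ) (v : EuclideanSpace ℂ n) :
    ‖A.toEuclideanLin v‖ ≤ opNorm A * ‖v‖ :=
  (Matrix.toEuclideanCLM (𝕜 := ℂ) A).le_opNorm v

end OperatorNorm

section Spectral

variable {n : Type*} [Fintype n] [DecidableEq n] {A C : Matrix n n ℂ}

lemma trace_cfc_eq_sum (hA : A.IsHermitian) (f : ℝ → ℝ) :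
    (cfc f A).trace = ∑ i, (f (hA.eigenvalues i) : ℂ) := by
  rw [hA.cfc_eq, Matrix.IsHermitian.cfc, Unitary.conjStarAlgAut_apply, Matrix.trace_mul_cycle,
    Unitary.coe_star_mul_self, one_mul, Matrix.trace_diagonal]
  rfl

lemma posSemidef_sqrt_eq_cfc (hA : A.PosSemidef) : hA.sqrt = cfc Real.sqrt A := by
  rw [hA.1.cfc_eq]
  rfl

lemma sqrt_conjTranspose_mul_self_eq_cfc_abs (hA : A.IsHermitian) :
    (Matrix.posSemidef_conjTranspose_mul_self A).sqrt = cfc (fun x : ℝ => |x|) A := by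
  have sq_eq : Aᴴ * A = cfc (fun x : ℝ => x ^ 2) A := by
    rw [cfc_pow_id A 2 hA.isSelfAdjoint, hA.eq, sq]
  rw [posSemidef_sqrt_eq_cfc, sq_eq, ← cfc_comp' Real.sqrt (· ^ 2) A]
  simp only [Real.sqrt_sq_eq_abs]

theorem traceNorm_eq_sum_abs_eigenvalues (hA : A.IsHermitian) :
    traceNorm A = ∑ i, |hA.eigenvalues i| := by
  rw [traceNorm, sqrt_conjTranspose_mul_self_eq_cfc_abs hA, trace_cfc_eq_sum hA]
  norm_cast

theorem frobNorm_sq_eq_sum_eigenvalues_sq (hA : A.IsHermitian) :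
    frobNorm A ^ 2 = ∑ i, hA.eigenvalues i ^ 2 := by
  have trace_eq : (Aᴴ * A).trace.re = ∑ i, hA.eigenvalues i ^ 2 := by
    rw [hA.eq, ← sq, ← cfc_pow_id (R := ℝ) A 2 hA.isSelfAdjoint, trace_cfc_eq_sum hA]
    norm_cast
  rw [frobNorm, trace_eq, Real.sq_sqrt (by positivity)]

lemma toEuclideanLin_eigenvectorBasis (hA : A.IsHermitian) (i : n) :
    A.toEuclideanLin (hA.eigenvectorBasis i) =
      (hA.eigenvalues i : ℂ) • hA.eigenvectorBasis i :=
  WithLp.ofLp_injective 2 (hA.mulVec_eigenvectorBasis i)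

lemma norm_inner_toEuclideanLin_eigenvectorBasis (hA : A.IsHermitian) (i : n) :
    ‖inner ℂ (hA.eigenvectorBasis i) (A.toEuclideanLin (hA.eigenvectorBasis i))‖ =
      |hA.eigenvalues i| := by
  simp [toEuclideanLin_eigenvectorBasis]

lemma abs_eigenvalues_le_opNorm (hA : A.IsHermitian) (i : n) :
    |hA.eigenvalues i| ≤ opNorm A := by
  simpa [toEuclideanLin_eigenvectorBasis, norm_smul]
    using norm_toEuclideanLin_apply_le A (hA.eigenvectorBasis i)

theorem frobNorm_sq_le_traceNorm_mul_opNorm (hA : A.IsHermitian) :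
    frobNorm A ^ 2 ≤ traceNorm A * opNorm A := by
  rw [frobNorm_sq_eq_sum_eigenvalues_sq hA, traceNorm_eq_sum_abs_eigenvalues hA, Finset.sum_mul]
  gcongr with i
  rw [← sq_abs, sq]
  gcongr
  exact abs_eigenvalues_le_opNorm hA i

lemma inner_toEuclideanLin_self (hA : A.IsHermitian) (v : EuclideanSpace ℂ n) :
    inner ℂ v (A.toEuclideanLin v) =
      ((∑ i, hA.eigenvalues i * ‖inner ℂ (hA.eigenvectorBasis i) v‖ ^ 2 : ℝ) : ℂ) := by
  have apply_eq : A.toEuclideanLin v = ∑ i, inner ℂ (hA.eigenvectorBasis i) v •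
      ((hA.eigenvalues i : ℂ) • hA.eigenvectorBasis i) := by
    conv_lhs => rw [← hA.eigenvectorBasis.sum_repr' v]
    simp only [map_sum, map_smul, toEuclideanLin_eigenvectorBasis]
  rw [apply_eq, inner_sum, Complex.ofReal_sum]
  refine Finset.sum_congr rfl fun i _ => ?_
  rw [inner_smul_right, inner_smul_right, ← inner_conj_symm v, mul_left_comm, Complex.mul_conj,
    Complex.normSq_eq_norm_sq, Complex.ofReal_mul]

theorem sum_norm_inner_toEuclideanLin_le_traceNorm {ι : Type*} [Fintype ι] (hA : A.IsHermitian)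
    (b : OrthonormalBasis ι ℂ (EuclideanSpace ℂ n)) :
    ∑ i, ‖inner ℂ (b i) (A.toEuclideanLin (b i))‖ ≤ traceNorm A := by
  set u := hA.eigenvectorBasis
  calc ∑ i, ‖inner ℂ (b i) (A.toEuclideanLin (b i))‖
      ≤ ∑ i, ∑ j, |hA.eigenvalues j| * ‖inner ℂ (u j) (b i)‖ ^ 2 := by
        gcongr with i
        rw [inner_toEuclideanLin_self hA, Complex.norm_real, Real.norm_eq_abs]
        refine (Finset.abs_sum_le_sum_abs _ _).trans_eq ?_
        simp only [abs_mul, abs_pow, abs_norm, u]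
    _ = ∑ j, |hA.eigenvalues j| * ∑ i, ‖inner ℂ (u j) (b i)‖ ^ 2 := by
        simp only [Finset.sum_comm (γ := n), Finset.mul_sum]
    _ = traceNorm A := by
        simp [b.sum_sq_norm_inner_left, traceNorm_eq_sum_abs_eigenvalues hA]

theorem traceNorm_sub_le (hA : A.IsHermitian) (hC : C.IsHermitian) :
    traceNorm (A - C) ≤ traceNorm A + traceNorm C := by
  have hAC := hA.sub hC
  set u := hAC.eigenvectorBasis
  calc traceNorm (A - C)
      = ∑ i, ‖inner ℂ (u i) ((A - C).toEuclideanLin (u i))‖ := by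
        simp only [u, norm_inner_toEuclideanLin_eigenvectorBasis,
          traceNorm_eq_sum_abs_eigenvalues hAC]
    _ ≤ ∑ i, (‖inner ℂ (u i) (A.toEuclideanLin (u i))‖ +
          ‖inner ℂ (u i) (C.toEuclideanLin (u i))‖) := by
        gcongr with i
        rw [map_sub, LinearMap.sub_apply, inner_sub_right]
        exact norm_sub_le _ _
    _ ≤ traceNorm A + traceNorm C := by
        rw [Finset.sum_add_distrib]
        exact add_le_add (sum_norm_inner_toEuclideanLin_le_traceNorm hA u)
          (sum_norm_inner_toEuclideanLin_le_traceNorm hC u)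

end Spectral

section NegativeInertia

variable {n : Type*} [Fintype n] [DecidableEq n] {A C : Matrix n n ℂ}

/-- The negative index of inertia: the number of negative eigenvalues, with multiplicity. It plays
the role of the dimension when bounding `traceNorm` of a traceless matrix by other norms. -/
def negInertia (hA : A.IsHermitian) : ℕ := Finset.card {i | hA.eigenvalues i < 0}

/-- The span of the eigenvectors of `A` with negative eigenvalue, a subspace of dimension
`negInertia hA` on which the quadratic form of `A` is negative definite. -/
def negEigenspan (hA : A.IsHermitian) : Submodule ℂ (EuclideanSpace ℂ n) :=
  Submodule.span ℂ (Set.range fun i : {i // hA.eigenvalues i < 0} => hA.eigenvectorBasis i)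

lemma finrank_negEigenspan (hA : A.IsHermitian) :
    Module.finrank ℂ (negEigenspan hA) = negInertia hA := by
  have indep : LinearIndependent ℂ
      fun i : {i // hA.eigenvalues i < 0} => hA.eigenvectorBasis i :=
    (hA.eigenvectorBasis.orthonormal.comp _ Subtype.val_injective).linearIndependent
  rw [negEigenspan, finrank_span_eq_card indep, Fintype.card_subtype, negInertia]

lemma inner_eigenvectorBasis_eq_zero_of_mem_negEigenspan (hA : A.IsHermitian)
    {v : EuclideanSpace ℂ n} (hv : v ∈ negEigenspan hA) {i : n} (hi : 0 ≤ hA.eigenvalues i) :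
    inner ℂ (hA.eigenvectorBasis i) v = 0 := by
  induction hv using Submodule.span_induction with
  | mem _ h =>
    obtain ⟨⟨j, hj⟩, rfl⟩ := h
    exact hA.eigenvectorBasis.inner_eq_zero (by rintro rfl; exact hj.not_ge hi)
  | zero => exact inner_zero_right _
  | add _ _ _ _ hx hy => rw [inner_add_right, hx, hy, add_zero]
  | smul _ _ _ hx => rw [inner_smul_right, hx, mul_zero]

lemma eq_zero_of_mem_negEigenspan_of_nonneg (hA : A.IsHermitian) {v : EuclideanSpace ℂ n}
    (hv : v ∈ negEigenspan hA) (hnonneg : 0 ≤ (inner ℂ v (A.toEuclideanLin v)).re) : v = 0 := by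
  set u := hA.eigenvectorBasis
  rw [inner_toEuclideanLin_self hA, Complex.ofReal_re] at hnonneg
  have inner_eq_zero (i : n) (hi : 0 ≤ hA.eigenvalues i) : inner ℂ (u i) v = 0 :=
    inner_eigenvectorBasis_eq_zero_of_mem_negEigenspan hA hv hi
  have term_nonpos (i : n) (_ : i ∈ Finset.univ) :
      hA.eigenvalues i * ‖inner ℂ (u i) v‖ ^ 2 ≤ 0 := by
    rcases lt_or_ge (hA.eigenvalues i) 0 with hi | hi
    · exact mul_nonpos_of_nonpos_of_nonneg hi.le (by positivity)
    · simp [inner_eq_zero i hi]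
  have term_eq_zero := (Finset.sum_eq_zero_iff_of_nonpos term_nonpos).mp
    (le_antisymm (Finset.sum_nonpos term_nonpos) hnonneg)
  refine InnerProductSpace.ext_inner_left_basis u.toBasis fun i => ?_
  rw [u.coe_toBasis, inner_zero_right]
  rcases lt_or_ge (hA.eigenvalues i) 0 with hi | hi
  · simpa [hi.ne] using term_eq_zero i (Finset.mem_univ i)
  · exact inner_eq_zero i hi

/-- The negative eigenspan of `A` meets `ker C` trivially, because `A + C` acts as `A` there. -/
theorem negInertia_le_rank_of_posSemidef_add (hA : A.IsHermitian) (hAC : (A + C).PosSemidef) :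
    negInertia hA ≤ C.rank := by
  have disjoint : Disjoint (negEigenspan hA) (LinearMap.ker C.toEuclideanLin) := by
    rw [Submodule.disjoint_def]
    intro v hv hCv
    refine eq_zero_of_mem_negEigenspan_of_nonneg hA hv ?_
    have nonneg := (Matrix.isPositive_toEuclideanLin_iff.mpr hAC).re_inner_nonneg_right v
    rwa [map_add, LinearMap.add_apply, LinearMap.mem_ker.mp hCv, add_zero] at nonneg
  have finrank_le := Submodule.finrank_add_finrank_le_of_disjoint disjoint
  have rank_nullity := LinearMap.finrank_range_add_finrank_ker C.toEuclideanLin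
  have rank_eq : C.rank = Module.finrank ℂ (LinearMap.range C.toEuclideanLin) :=
    C.rank_eq_finrank_range_toLin (PiLp.basisFun 2 ℂ n) (PiLp.basisFun 2 ℂ n)
  rw [finrank_negEigenspan] at finrank_le
  omega

theorem traceNorm_eq_two_mul_sum_neg_eigenvalues (hA : A.IsHermitian) (htr : A.trace = 0) :
    traceNorm A = 2 * ∑ i with hA.eigenvalues i < 0, |hA.eigenvalues i| := by
  have sum_eq_zero : ∑ i, hA.eigenvalues i = 0 := by
    simpa using congrArg Complex.re (hA.trace_eq_sum_eigenvalues.symm.trans htr)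
  calc traceNorm A = ∑ i, (|hA.eigenvalues i| - hA.eigenvalues i) := by
        rw [Finset.sum_sub_distrib, sum_eq_zero, sub_zero, traceNorm_eq_sum_abs_eigenvalues hA]
    _ = ∑ i, if hA.eigenvalues i < 0 then 2 * |hA.eigenvalues i| else 0 := by
        refine Finset.sum_congr rfl fun i _ => ?_
        split_ifs with hi
        · rw [abs_of_neg hi]; ring
        · rw [abs_of_nonneg (not_lt.mp hi), sub_self]
    _ = 2 * ∑ i with hA.eigenvalues i < 0, |hA.eigenvalues i| := by
        rw [← Finset.sum_filter, Finset.mul_sum]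

theorem traceNorm_le_two_mul_negInertia_mul_opNorm (hA : A.IsHermitian) (htr : A.trace = 0) :
    traceNorm A ≤ 2 * (negInertia hA * opNorm A) := by
  rw [traceNorm_eq_two_mul_sum_neg_eigenvalues hA htr, negInertia, ← nsmul_eq_mul]
  gcongr
  exact Finset.sum_le_card_nsmul _ _ _ fun i _ => abs_eigenvalues_le_opNorm hA i

theorem traceNorm_le_two_mul_sqrt_negInertia_mul_frobNorm (hA : A.IsHermitian)
    (htr : A.trace = 0) : traceNorm A ≤ 2 * (√(negInertia hA) * frobNorm A) := by
  rw [traceNorm_eq_two_mul_sum_neg_eigenvalues hA htr]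
  gcongr
  refine le_of_sq_le_sq ?_ (mul_nonneg (Real.sqrt_nonneg _) (frobNorm_nonneg A))
  calc (∑ i with hA.eigenvalues i < 0, |hA.eigenvalues i|) ^ 2
      ≤ negInertia hA * ∑ i with hA.eigenvalues i < 0, |hA.eigenvalues i| ^ 2 :=
        sq_sum_le_card_mul_sum_sq
    _ ≤ negInertia hA * ∑ i, hA.eigenvalues i ^ 2 := by
        simp only [sq_abs]
        gcongr
        exact Finset.subset_univ _
    _ = (√(negInertia hA) * frobNorm A) ^ 2 := by
        rw [mul_pow, Real.sq_sqrt (Nat.cast_nonneg _), frobNorm_sq_eq_sum_eigenvalues_sq hA]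

end NegativeInertia

section LowRankComparison

variable {n : Type*} [Fintype n] [DecidableEq n] {ρ ρ' σ : Matrix n n ℂ}

lemma negInertia_sub_le_rank (hρ : ρ.PosSemidef) (h : (ρ - σ).IsHermitian) :
    negInertia h ≤ σ.rank :=
  negInertia_le_rank_of_posSemidef_add h (by rwa [sub_add_cancel])

theorem traceNorm_sub_le_two_mul_rank_mul_opNorm (hρ : ρ.PosSemidef) (hσ : σ.IsHermitian)
    (htr : ρ.trace = σ.trace) : traceNorm (ρ - σ) ≤ 2 * (σ.rank * opNorm (ρ - σ)) := by
  have h := hρ.1.sub hσ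
  grw [traceNorm_le_two_mul_negInertia_mul_opNorm h (by rw [Matrix.trace_sub, htr, sub_self]),
    negInertia_sub_le_rank hρ h]
  exact opNorm_nonneg _

theorem traceNorm_sub_le_two_mul_sqrt_rank_mul_frobNorm (hρ : ρ.PosSemidef) (hσ : σ.IsHermitian)
    (htr : ρ.trace = σ.trace) : traceNorm (ρ - σ) ≤ 2 * (√σ.rank * frobNorm (ρ - σ)) := by
  have h := hρ.1.sub hσ
  grw [traceNorm_le_two_mul_sqrt_negInertia_mul_frobNorm h
    (by rw [Matrix.trace_sub, htr, sub_self]), negInertia_sub_le_rank hρ h]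
  exact frobNorm_nonneg _

theorem frobNorm_sub_le_sqrt_two_mul_rank_mul_opNorm (hρ : ρ.PosSemidef) (hσ : σ.IsHermitian)
    (htr : ρ.trace = σ.trace) : frobNorm (ρ - σ) ≤ √(2 * σ.rank) * opNorm (ρ - σ) := by
  refine le_of_sq_le_sq ?_ (mul_nonneg (Real.sqrt_nonneg _) (opNorm_nonneg _))
  calc frobNorm (ρ - σ) ^ 2 ≤ traceNorm (ρ - σ) * opNorm (ρ - σ) :=
        frobNorm_sq_le_traceNorm_mul_opNorm (hρ.1.sub hσ)
    _ ≤ 2 * (σ.rank * opNorm (ρ - σ)) * opNorm (ρ - σ) := by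
        grw [traceNorm_sub_le_two_mul_rank_mul_opNorm hρ hσ htr]
        exact opNorm_nonneg _
    _ = (√(2 * σ.rank) * opNorm (ρ - σ)) ^ 2 := by
        rw [mul_pow, Real.sq_sqrt (by positivity)]
        ring

theorem traceNorm_sub_le_of_rank_approx (hρ : ρ.PosSemidef)
    (hρ' : ρ'.PosSemidef) (hσ : σ.IsHermitian) (htr : ρ.trace = σ.trace)
    (htr' : ρ'.trace = σ.trace) :
    traceNorm (ρ - ρ') ≤
      2 * (√σ.rank * frobNorm (ρ - ρ')) + (2 * √2 + 2) * (σ.rank * opNorm (ρ' - σ)) := by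
  have frob_triangle : frobNorm (ρ - σ) ≤ frobNorm (ρ - ρ') + √(2 * σ.rank) * opNorm (ρ' - σ) := by
    grw [← sub_add_sub_cancel ρ ρ' σ, frobNorm_add_le,
      frobNorm_sub_le_sqrt_two_mul_rank_mul_opNorm hρ' hσ htr']
  calc traceNorm (ρ - ρ') = traceNorm ((ρ - σ) - (ρ' - σ)) := by rw [sub_sub_sub_cancel_right]
    _ ≤ traceNorm (ρ - σ) + traceNorm (ρ' - σ) := traceNorm_sub_le (hρ.1.sub hσ) (hρ'.1.sub hσ)
    _ ≤ 2 * (√σ.rank * (frobNorm (ρ - ρ') + √(2 * σ.rank) * opNorm (ρ' - σ))) +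
          2 * (σ.rank * opNorm (ρ' - σ)) := by
        grw [traceNorm_sub_le_two_mul_sqrt_rank_mul_frobNorm hρ hσ htr, frob_triangle,
          traceNorm_sub_le_two_mul_rank_mul_opNorm hρ' hσ htr']
    _ = 2 * (√σ.rank * frobNorm (ρ - ρ')) + (2 * √2 + 2) * (σ.rank * opNorm (ρ' - σ)) := by
        rw [Real.sqrt_mul zero_le_two]
        linear_combination 2 * √2 * opNorm (ρ' - σ) * Real.mul_self_sqrt σ.rank.cast_nonneg

theorem frobNorm_sub_le_of_rank_approx (hρ : ρ.PosSemidef)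
    (hρ' : ρ'.PosSemidef) (hσ : σ.IsHermitian) (htr : ρ.trace = σ.trace)
    (htr' : ρ'.trace = σ.trace) :
    frobNorm (ρ - ρ') ≤ √(2 * σ.rank) * (opNorm (ρ - σ) + opNorm (ρ - ρ')) := by
  set a := opNorm (ρ - σ)
  set b := opNorm (ρ - ρ')
  have op_triangle : opNorm (ρ' - σ) ≤ a + b := by
    simpa only [sub_sub_sub_cancel_left] using opNorm_sub_le (ρ - σ) (ρ - ρ')
  have traceNorm_le : traceNorm (ρ - ρ') ≤ 2 * (σ.rank * a) + 2 * (σ.rank * (a + b)) := by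
    grw [← sub_sub_sub_cancel_right ρ ρ' σ, traceNorm_sub_le (hρ.1.sub hσ) (hρ'.1.sub hσ),
      traceNorm_sub_le_two_mul_rank_mul_opNorm hρ hσ htr,
      traceNorm_sub_le_two_mul_rank_mul_opNorm hρ' hσ htr', op_triangle]
  have hb : 0 ≤ b := opNorm_nonneg _
  have hab : 0 ≤ a + b := add_nonneg (opNorm_nonneg _) hb
  refine le_of_sq_le_sq ?_ (by positivity)
  calc frobNorm (ρ - ρ') ^ 2 ≤ traceNorm (ρ - ρ') * b :=
        frobNorm_sq_le_traceNorm_mul_opNorm (hρ.1.sub hρ'.1)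
    _ ≤ (2 * (σ.rank * a) + 2 * (σ.rank * (a + b))) * b := by gcongr
    _ = 2 * σ.rank * ((a + b) ^ 2 - a ^ 2) := by ring
    _ ≤ 2 * σ.rank * (a + b) ^ 2 := by gcongr; exact sub_le_self _ (sq_nonneg a)
    _ = (√(2 * σ.rank) * (a + b)) ^ 2 := by rw [mul_pow, Real.sq_sqrt (by positivity)]

end LowRankComparison

theorem pls_traceNorm_deterministic_bound_intermediate_general {n : Type*} [Fintype n]
    [DecidableEq n] {Φ B S σ : Matrix n n ℂ} (hΦ : Φ.PosSemidef) (hB : B.PosSemidef)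
    (hS : S.PosSemidef) (hσ : σ.IsHermitian) (htrΦ : Φ.trace = σ.trace) (htrB : B.trace = σ.trace)
    (htrS : S.trace = σ.trace) {τ δ : ℝ} {r : ℕ} (hrank : σ.rank ≤ r)
    (h₁ : opNorm (B - Φ) ≤ 2 * τ) (h₂ : frobNorm (S - Φ) ≤ frobNorm (B - Φ))
    (h₃ : opNorm (B - σ) ≤ δ) :
    traceNorm (S - Φ) ≤ r * ((4 * √2 + 2) * δ + (4 + 8 * √2) * τ) := by
  set ε := opNorm (B - σ) + opNorm (B - Φ)
  have hε : 0 ≤ ε := add_nonneg (opNorm_nonneg _) (opNorm_nonneg _)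
  have ε_le : ε ≤ δ + 2 * τ := add_le_add h₃ h₁
  have op_le : opNorm (Φ - σ) ≤ ε := by
    simpa only [sub_sub_sub_cancel_left] using opNorm_sub_le (B - σ) (B - Φ)
  calc traceNorm (S - Φ)
      ≤ 2 * (√σ.rank * frobNorm (S - Φ)) + (2 * √2 + 2) * (σ.rank * opNorm (Φ - σ)) :=
        traceNorm_sub_le_of_rank_approx hS hΦ hσ htrS htrΦ
    _ ≤ 2 * (√σ.rank * (√(2 * σ.rank) * ε)) + (2 * √2 + 2) * (σ.rank * ε) := by
        grw [h₂, frobNorm_sub_le_of_rank_approx hB hΦ hσ htrB htrΦ, op_le]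
    _ = (4 * √2 + 2) * (σ.rank * ε) := by
        rw [Real.sqrt_mul zero_le_two]
        linear_combination 2 * √2 * ε * Real.mul_self_sqrt σ.rank.cast_nonneg
    _ ≤ (4 * √2 + 2) * (r * (δ + 2 * τ)) := by gcongr
    _ = r * ((4 * √2 + 2) * δ + (4 + 8 * √2) * τ) := by ring

/-- deterministic trace-norm content of Theorem 4, eq. (50): if `Φ, B, S` are
density matrices, `‖B − Φ‖_∞ ≤ 2τ`, `‖S − Φ‖₂ ≤ ‖B − Φ‖₂`, and the intermediate estimator `B` is
`δ`-almost rank `r`, then `‖S − Φ‖₁ ≤ r((4√2 + 2)δ + (4 + 8√2)τ)`. -/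
theorem pls_traceNorm_deterministic_bound_intermediate (n : ℕ)
    (Φ B S : Matrix (Fin n) (Fin n) ℂ)
    (hΦ : IsDensity Φ) (hB : IsDensity B) (hS : IsDensity S)
    (τ δ : ℝ) (r : ℕ) (hτ : 0 ≤ τ) (hδ : 0 ≤ δ) (hr : 1 ≤ r)
    (h₁ : opNorm (B - Φ) ≤ 2 * τ)
    (h₂ : frobNorm (S - Φ) ≤ frobNorm (B - Φ))
    (h₃ : AlmostRank r δ B) :
    traceNorm (S - Φ) ≤ r * ((4 * Real.sqrt 2 + 2) * δ + (4 + 8 * Real.sqrt 2) * τ) := by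
  obtain ⟨σ, hσ, hrank, hBσ⟩ := h₃
  exact pls_traceNorm_deterministic_bound_intermediate_general hΦ.1 hB.1 hS.1 hσ.1.1
    (hΦ.2.trans hσ.2.symm) (hB.2.trans hσ.2.symm) (hS.2.trans hσ.2.symm) hrank h₁ h₂ hBσ
end
end
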